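/- arXiv:2602.12061 — 9 statements merged into one kernel-verified Lean document; each statement's English description precedes it below -/
import Mathlib

section
/- Let δ > 0, c > 0, s₀ > 0, and let ω : ℝ → ℝ satisfy ω(r) > 0 for r ∈ (0, δ], with r ↦ ω(r)·r⁴ integrable on (0, δ). Define w₀(r) = (1/2)·c·ω(r)·s₀²·r. Then the iterated integral ∫₀^δ ∫₀^{2π} ∫_z^δ ∫₀^{arccos(z/r)} w₀(r)·r²·sin(φ) dφ dr dθ dz equals (π·c·s₀²/2)·∫₀^δ ω(r)·r⁴ dr. -/
open Real MeasureTheory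

lemma kernel_int (δ r : ℝ) (hr : r ∈ Set.Ioc (0:ℝ) δ) :
    ∫ z in Set.Ioc (0:ℝ) δ, (if z < r then (r - z) / r ^ 2 else 0) = 1 / 2 := by
  have h0 : r ≠ 0 := ne_of_gt hr.1
  have h1 : ∀ z, (if z < r then (r - z) / r ^ 2 else 0)
      = (Set.Iic r).indicator (fun z => (r - z) / r ^ 2) z := by
    intro z
    by_cases h : z < r
    · simp [h, h.le]
    · rcases eq_or_lt_of_le (not_lt.mp h) with hlt | hlt
      · simp [← hlt]
      · simp [h, hlt]
  simp_rw [h1]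
  rw [setIntegral_indicator measurableSet_Iic]
  have h2 : Set.Ioc 0 δ ∩ Set.Iic r = Set.Ioc 0 r := by
    ext x; simp only [Set.mem_inter_iff, Set.mem_Ioc, Set.mem_Iic]
    exact ⟨fun h => ⟨h.1.1, h.2⟩, fun h => ⟨⟨h.1, h.2.trans hr.2⟩, h.2⟩⟩
  rw [h2, ← intervalIntegral.integral_of_le hr.1.le, intervalIntegral.integral_div,
    intervalIntegral.integral_sub (by simp) (by simp)]
  simp only [intervalIntegral.integral_const, integral_id, smul_eq_mul]
  field_simp
  ring

lemma kernel_integrable (δ r : ℝ) (hr : r ∈ Set.Ioc (0:ℝ) δ) :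
    Integrable (fun z => if z < r then (r - z) / r ^ 2 else 0)
      (volume.restrict (Set.Ioc (0:ℝ) δ)) := by
  by_contra h
  have := kernel_int δ r hr
  rw [integral_undef h] at this
  norm_num at this

lemma fubini_kernel (δ : ℝ) (g : ℝ → ℝ) (hg : IntegrableOn g (Set.Ioc (0:ℝ) δ)) :
    ∫ z in Set.Ioc (0:ℝ) δ, ∫ r in Set.Ioc (0:ℝ) δ,
      (if z < r then (r - z) / r ^ 2 else 0) * g r
      = (1 / 2) * ∫ r in Set.Ioc (0:ℝ) δ, g r := by
  have hmem : ∀ᵐ r ∂(volume.restrict (Set.Ioc (0:ℝ) δ)), r ∈ Set.Ioc (0:ℝ) δ :=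
    ae_restrict_mem measurableSet_Ioc
  have hF : Integrable (Function.uncurry fun z r : ℝ =>
      (if z < r then (r - z) / r ^ 2 else 0) * g r)
      ((volume.restrict (Set.Ioc (0:ℝ) δ)).prod (volume.restrict (Set.Ioc (0:ℝ) δ))) := by
    rw [integrable_prod_iff']
    · refine ⟨?_, ?_⟩
      · filter_upwards [hmem] with r hr
        exact (kernel_integrable δ r hr).mul_const (g r)
      · refine (hg.norm.const_mul (1/2)).congr ?_
        filter_upwards [hmem] with r hr
        rw [← kernel_int δ r hr, ← integral_mul_const]
        congr 1
        ext z
        simp only [Function.uncurry, norm_mul]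
        congr 1
        split_ifs with h
        · rw [Real.norm_of_nonneg]
          have : 0 ≤ r - z := by linarith
          positivity
        · simp
    · refine AEStronglyMeasurable.mul (Measurable.aestronglyMeasurable ?_)
        hg.aestronglyMeasurable.comp_snd
      exact Measurable.ite (measurableSet_lt measurable_fst measurable_snd)
        (by fun_prop) measurable_const
  rw [integral_integral_swap hF, ← integral_const_mul]
  refine integral_congr_ae ?_
  filter_upwards [hmem] with r hr
  rw [integral_mul_const, kernel_int δ r hr]

/-- 3D energy release rate under the critical stretch criterion: with
`w₀(r) = (1/2)·c·ω(r)·s₀²·r`, the iterated integral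
`∫₀^δ ∫₀^{2π} ∫_z^δ ∫₀^{arccos(z/r)} w₀(r)·r²·sin φ dφ dr dθ dz`
equals `(π·c·s₀²/2)·∫₀^δ ω(r)·r⁴ dr`. -/
theorem energy_release_rate_critical_stretch_3D
    (δ c s₀ : ℝ) (hδ : 0 < δ) (hc : 0 < c) (hs₀ : 0 < s₀)
    (ω : ℝ → ℝ) (hω : ∀ r ∈ Set.Ioc (0:ℝ) δ, 0 < ω r)
    (hint : IntegrableOn (fun r : ℝ => ω r * r ^ 4) (Set.Ioo 0 δ))
    (w₀ : ℝ → ℝ) (hw₀ : ∀ r, w₀ r = (1/2) * c * ω r * s₀ ^ 2 * r) :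
    (∫ z in (0:ℝ)..δ, ∫ θ in (0:ℝ)..(2 * π), ∫ r in z..δ,
        ∫ φ in (0:ℝ)..(Real.arccos (z / r)), w₀ r * r ^ 2 * Real.sin φ)
      = (π * c * s₀ ^ 2 / 2) * ∫ r in (0:ℝ)..δ, ω r * r ^ 4 := by
  have hg : IntegrableOn (fun r : ℝ => ω r * r ^ 4) (Set.Ioc 0 δ) :=
    hint.congr_set_ae Ioo_ae_eq_Ioc.symm
  rw [intervalIntegral.integral_of_le hδ.le, intervalIntegral.integral_of_le hδ.le]
  have key := fubini_kernel δ _ hg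
  have hz : ∀ z ∈ Set.Ioc (0:ℝ) δ, (∫ θ in (0:ℝ)..(2 * π), ∫ r in z..δ,
        ∫ φ in (0:ℝ)..(Real.arccos (z / r)), w₀ r * r ^ 2 * Real.sin φ)
      = (π * c * s₀ ^ 2) * ∫ r in Set.Ioc (0:ℝ) δ,
      (if z < r then (r - z) / r ^ 2 else 0) * (ω r * r ^ 4) := by
    intro z hz
    have e1 : ∀ r, (if z < r then (r - z) / r ^ 2 else 0) * (ω r * r ^ 4)
        = (Set.Ioi z).indicator (fun r => (r - z) / r ^ 2 * (ω r * r ^ 4)) r := by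
      intro r
      by_cases h : z < r <;> simp [h]
    have e2 : Set.Ioc 0 δ ∩ Set.Ioi z = Set.Ioc z δ := by
      ext x; simp only [Set.mem_inter_iff, Set.mem_Ioc, Set.mem_Ioi]
      exact ⟨fun h => ⟨h.2, h.1.2⟩, fun h => ⟨⟨hz.1.trans h.1, h.2⟩, h.1⟩⟩
    have e3 : (∫ r in z..δ, ∫ φ in (0:ℝ)..(Real.arccos (z / r)), w₀ r * r ^ 2 * Real.sin φ)
        = (c * s₀ ^ 2 / 2) * ∫ r in Set.Ioc z δ, (r - z) / r ^ 2 * (ω r * r ^ 4) := by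
      rw [intervalIntegral.integral_of_le hz.2, ← integral_const_mul]
      refine setIntegral_congr_fun measurableSet_Ioc ?_
      intro r hr
      have hr0 : 0 < r := hz.1.trans hr.1
      have h1 : z / r ≤ 1 := (div_le_one hr0).mpr hr.1.le
      have h2 : 0 ≤ z / r := div_nonneg hz.1.le hr0.le
      simp only [intervalIntegral.integral_const_mul, integral_sin, Real.cos_zero]
      rw [Real.cos_arccos (by linarith) h1, hw₀]
      field_simp
    simp_rw [e1]
    rw [setIntegral_indicator measurableSet_Ioi, e2, e3, intervalIntegral.integral_const,
      smul_eq_mul]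
    ring
  rw [setIntegral_congr_fun measurableSet_Ioc hz, integral_const_mul, key]
  ring
end

section
/- Let δ > 0 and w_c > 0. Then the iterated integral ∫₀^δ ∫₀^{2π} ∫_z^δ ∫₀^{arccos(z/r)} w_c·r²·sin(φ) dφ dr dθ dz equals π·w_c·δ⁴/4. Consequently, requiring this quantity to equal the energy release rate G₀ > 0 yields w_c = 4·G₀/(π·δ⁴). -/
open Real MeasureTheory

lemma inner_phi (wc z r : ℝ) (hz : 0 ≤ z) (hr : z ≤ r) :
    (∫ φ in (0:ℝ)..(Real.arccos (z / r)), wc * r ^ 2 * Real.sin φ) = wc * (r ^ 2 - z * r) := by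
  rw [intervalIntegral.integral_const_mul, integral_sin, Real.cos_zero]
  rcases (hz.trans hr).eq_or_lt with h | h
  · subst h; simp
  · rw [Real.cos_arccos (by linarith [div_nonneg hz h.le]) ((div_le_one h).2 hr)]
    field_simp

lemma inner_r (wc z δ : ℝ) (hz : 0 ≤ z) (hr : z ≤ δ) :
    (∫ r in z..δ, ∫ φ in (0:ℝ)..(Real.arccos (z / r)), wc * r ^ 2 * Real.sin φ)
      = wc * (δ ^ 3 / 3 - z * δ ^ 2 / 2 + z ^ 3 / 6) := by
  have h : Set.EqOn (fun r => ∫ φ in (0:ℝ)..(Real.arccos (z / r)), wc * r ^ 2 * Real.sin φ)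
      (fun r => wc * (r ^ 2 - z * r)) (Set.uIcc z δ) := by
    intro r hr'
    rw [Set.uIcc_of_le hr] at hr'
    exact inner_phi wc z r hz hr'.1
  rw [intervalIntegral.integral_congr h,
    intervalIntegral.integral_eq_sub_of_hasDerivAt
      (f := fun r => wc * (r ^ 3 / 3 - z * (r ^ 2 / 2)))]
  · ring
  · intro x _
    have := (((hasDerivAt_pow 3 x).div_const 3).sub
      (((hasDerivAt_pow 2 x).div_const 2).const_mul z)).const_mul wc
    refine HasDerivAt.congr_deriv this ?_
    norm_num
  · exact Continuous.intervalIntegrable (by fun_prop) _ _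

lemma full_integral (δ wc : ℝ) (hδ : 0 < δ) :
    (∫ z in (0:ℝ)..δ, ∫ θ in (0:ℝ)..(2 * π), ∫ r in z..δ,
        ∫ φ in (0:ℝ)..(Real.arccos (z / r)), wc * r ^ 2 * Real.sin φ)
      = π * wc * δ ^ 4 / 4 := by
  have h : Set.EqOn (fun z => ∫ θ in (0:ℝ)..(2 * π), ∫ r in z..δ,
        ∫ φ in (0:ℝ)..(Real.arccos (z / r)), wc * r ^ 2 * Real.sin φ)
      (fun z => 2 * π * (wc * (δ ^ 3 / 3 - z * δ ^ 2 / 2 + z ^ 3 / 6))) (Set.uIcc 0 δ) := by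
    intro z hz
    rw [Set.uIcc_of_le hδ.le] at hz
    simp only [inner_r wc z δ hz.1 hz.2, intervalIntegral.integral_const, smul_eq_mul, sub_zero]
  rw [intervalIntegral.integral_congr h,
    intervalIntegral.integral_eq_sub_of_hasDerivAt
      (f := fun z => 2 * π * wc * (δ ^ 3 / 3 * z - δ ^ 2 / 2 * (z ^ 2 / 2) + z ^ 4 / 24))]
  · ring
  · intro x _
    have := (((((hasDerivAt_id' x).const_mul (δ ^ 3 / 3)).sub
      (((hasDerivAt_pow 2 x).div_const 2).const_mul (δ ^ 2 / 2)))).add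
      ((hasDerivAt_pow 4 x).div_const 24)).const_mul (2 * π * wc)
    refine HasDerivAt.congr_deriv this ?_
    norm_num; ring
  · exact Continuous.intervalIntegrable (by fun_prop) _ _

/-- 3D energy release rate under the critical energy density criterion: the
iterated integral `∫₀^δ ∫₀^{2π} ∫_z^δ ∫₀^{arccos(z/r)} w_c·r²·sin φ dφ dr dθ dz`
equals `π·w_c·δ⁴/4`; consequently, if this equals `G₀ > 0`, then
`w_c = 4·G₀/(π·δ⁴)`. -/
theorem energy_release_rate_critical_energy_density_3D
    (δ wc : ℝ) (hδ : 0 < δ) (hwc : 0 < wc) :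
    (∫ z in (0:ℝ)..δ, ∫ θ in (0:ℝ)..(2 * π), ∫ r in z..δ,
        ∫ φ in (0:ℝ)..(Real.arccos (z / r)), wc * r ^ 2 * Real.sin φ)
      = π * wc * δ ^ 4 / 4 ∧
    ∀ G₀ : ℝ, 0 < G₀ →
      (∫ z in (0:ℝ)..δ, ∫ θ in (0:ℝ)..(2 * π), ∫ r in z..δ,
          ∫ φ in (0:ℝ)..(Real.arccos (z / r)), wc * r ^ 2 * Real.sin φ) = G₀ →
      wc = 4 * G₀ / (π * δ ^ 4) := by
  refine ⟨full_integral δ wc hδ, fun G₀ _ h => ?_⟩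
  rw [full_integral δ wc hδ] at h
  have := Real.pi_pos
  rw [← h]
  field_simp
end

section
/- Let δ > 0, h > 0, c > 0, s₀ > 0, and let ω : ℝ → ℝ satisfy ω(r) > 0 for r ∈ (0, δ], with r ↦ ω(r)·r³ integrable on (0, δ). Define w₀(r) = (1/2)·c·ω(r)·s₀²·r. Then the iterated integral h·∫₀^δ ∫_z^δ ∫_{-arccos(z/r)}^{arccos(z/r)} w₀(r)·r dθ dr dz equals h·c·s₀²·∫₀^δ ω(r)·r³ dr. -/
open Real MeasureTheory

lemma aux_arccos_one : ∫ u in (0:ℝ)..1, Real.arccos u = 1 := by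
  have h := intervalIntegral.integral_eq_sub_of_hasDerivAt_of_le
    (f := fun u : ℝ => u * Real.arccos u - √(1 - u ^ 2)) (f' := Real.arccos)
    (a := 0) (b := 1) zero_le_one
    (by
      have := Real.continuous_arccos
      fun_prop)
    (by
      intro x hx
      have hpos : 0 < 1 - x ^ 2 := by nlinarith [hx.1, hx.2]
      have h1 := Real.hasDerivAt_arccos (x := x) (by linarith [hx.1]) (by linarith [hx.2])
      have h2 : HasDerivAt (fun u : ℝ => 1 - u ^ 2) (-(2 * x)) x := by
        simpa using ((hasDerivAt_pow 2 x).const_sub 1)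
      have h3 := h2.sqrt hpos.ne'
      have h4 := ((hasDerivAt_id x).mul h1).sub h3
      have hs : √(1 - x ^ 2) ≠ 0 := (Real.sqrt_pos.2 hpos).ne'
      refine h4.congr_deriv ?_
      simp only [id]
      field_simp
      ring)
    (Real.continuous_arccos.intervalIntegrable _ _)
  rw [h]
  simp

lemma aux_arccos_zero {z r : ℝ} (hr : 0 < r) (hz : r ≤ z) : Real.arccos (z / r) = 0 :=
  Real.arccos_eq_zero.2 ((one_le_div hr).2 hz)

lemma aux_arccos_scaled {r δ : ℝ} (hr : 0 < r) (hrδ : r ≤ δ) :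
    ∫ z in (0:ℝ)..δ, Real.arccos (z / r) = r := by
  have hc : Continuous fun z : ℝ => Real.arccos (z / r) :=
    Real.continuous_arccos.comp (continuous_id.div_const r)
  rw [← intervalIntegral.integral_add_adjacent_intervals (hc.intervalIntegrable 0 r)
    (hc.intervalIntegrable r δ)]
  have h2 : ∫ z in r..δ, Real.arccos (z / r) = 0 := by
    rw [intervalIntegral.integral_congr (g := fun _ => (0:ℝ))]
    · simp
    · intro z hz
      rw [Set.uIcc_of_le hrδ] at hz
      exact aux_arccos_zero hr hz.1
  rw [h2, intervalIntegral.integral_comp_div _ hr.ne']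
  simp [hr.ne', aux_arccos_one]

/-- 2D energy release rate under the critical stretch criterion: with
`w₀(r) = (1/2)·c·ω(r)·s₀²·r`, the iterated integral
`h·∫₀^δ ∫_z^δ ∫_{-arccos(z/r)}^{arccos(z/r)} w₀(r)·r dθ dr dz`
equals `h·c·s₀²·∫₀^δ ω(r)·r³ dr`. -/
theorem energy_release_rate_critical_stretch_2D
    (δ h c s₀ : ℝ) (hδ : 0 < δ) (hh : 0 < h) (hc : 0 < c) (hs₀ : 0 < s₀)
    (ω : ℝ → ℝ) (hω : ∀ r ∈ Set.Ioc (0:ℝ) δ, 0 < ω r)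
    (hint : IntegrableOn (fun r : ℝ => ω r * r ^ 3) (Set.Ioo 0 δ))
    (w₀ : ℝ → ℝ) (hw₀ : ∀ r, w₀ r = (1/2) * c * ω r * s₀ ^ 2 * r) :
    h * (∫ z in (0:ℝ)..δ, ∫ r in z..δ,
        ∫ θ in (-(Real.arccos (z / r)))..(Real.arccos (z / r)), w₀ r * r)
      = h * c * s₀ ^ 2 * ∫ r in (0:ℝ)..δ, ω r * r ^ 3 := by
  have hint' : Integrable (fun r : ℝ => ω r * r ^ 3) (volume.restrict (Set.Ioc 0 δ)) :=
    (integrableOn_Ioc_iff_integrableOn_Ioo enorm_ne_top).2 hint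
  set μ := volume.restrict (Set.Ioc 0 δ) with hμ
  have hmem : ∀ᵐ r ∂μ, r ∈ Set.Ioc 0 δ := ae_restrict_mem measurableSet_Ioc
  set g : ℝ → ℝ → ℝ := fun z r => (ω r * r ^ 3) * (r⁻¹ * Real.arccos (z / r)) with hg
  have hinner : ∀ r ∈ Set.Ioc 0 δ, ∫ z, g z r ∂μ = ω r * r ^ 3 := by
    intro r hr
    have h1 := aux_arccos_scaled hr.1 hr.2
    rw [intervalIntegral.integral_of_le hδ.le] at h1
    simp only [hg]
    rw [integral_const_mul, integral_const_mul, h1, inv_mul_cancel₀ hr.1.ne', mul_one]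
  have hgint : Integrable (Function.uncurry g) (μ.prod μ) := by
    have hm : AEStronglyMeasurable (Function.uncurry g) (μ.prod μ) := by
      refine (hint'.aestronglyMeasurable.comp_snd (μ := μ)).mul ?_
      have : Measurable fun p : ℝ × ℝ => p.2⁻¹ * Real.arccos (p.1 / p.2) :=
        measurable_snd.inv.mul (Real.continuous_arccos.measurable.comp
          (measurable_fst.div measurable_snd))
      exact this.aestronglyMeasurable
    rw [integrable_prod_iff' hm]
    constructor
    · filter_upwards [hmem] with r hr
      have hc : Continuous fun z : ℝ => Real.arccos (z / r) :=
        Real.continuous_arccos.comp (continuous_id.div_const r)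
      have : Integrable (fun z : ℝ => Real.arccos (z / r)) μ :=
        (hc.intervalIntegrable 0 δ).1
      exact (this.const_mul r⁻¹).const_mul (ω r * r ^ 3)
    · refine hint'.congr ?_
      filter_upwards [hmem] with r hr
      rw [← hinner r hr]
      congr 1
      funext z
      have h0 : 0 ≤ g z r := by
        have := (hω r hr).le
        have := hr.1.le
        have := Real.arccos_nonneg (z / r)
        simp only [hg]
        positivity
      simp only [Function.uncurry]
      rw [Real.norm_of_nonneg h0]
  have hz : ∀ z ∈ Set.Ioc 0 δ, (∫ r in z..δ,
        ∫ θ in (-(Real.arccos (z / r)))..(Real.arccos (z / r)), w₀ r * r)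
      = c * s₀ ^ 2 * ∫ r, g z r ∂μ := by
    intro z hz
    rw [intervalIntegral.integral_of_le hz.2, ← integral_const_mul]
    rw [← setIntegral_eq_of_subset_of_forall_sdiff_eq_zero (s := Set.Ioc z δ) measurableSet_Ioc
      (Set.Ioc_subset_Ioc_left hz.1.le)]
    · refine setIntegral_congr_fun measurableSet_Ioc fun r hr => ?_
      have hr0 : r ≠ 0 := hr.1.ne'
      simp only [intervalIntegral.integral_const, hw₀, hg, smul_eq_mul]
      field_simp
      ring
    · intro r hr
      have : r ≤ z := by
        by_contra hcon
        exact hr.2 ⟨not_le.1 hcon, hr.1.2⟩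
      simp [hg, aux_arccos_zero hr.1.1 this]
  have hswap : ∫ z, ∫ r, g z r ∂μ ∂μ = ∫ r, ω r * r ^ 3 ∂μ := by
    rw [integral_integral_swap hgint]
    exact setIntegral_congr_fun measurableSet_Ioc hinner
  rw [intervalIntegral.integral_of_le hδ.le, intervalIntegral.integral_of_le hδ.le,
    setIntegral_congr_fun measurableSet_Ioc hz, integral_const_mul, hswap]
  ring
end

section
/- Let δ > 0, h > 0, and w_c > 0. Then the iterated integral h·∫₀^δ ∫_z^δ ∫_{-arccos(z/r)}^{arccos(z/r)} w_c·r dθ dr dz equals 2·h·w_c·δ³/3. Consequently, requiring this quantity to equal the energy release rate G₀ > 0 yields w_c = 3·G₀/(2·h·δ³). -/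
open Real MeasureTheory

lemma inner_aux (δ wc z : ℝ) (hz : 0 < z) (hzδ : z ≤ δ) :
    (∫ r in z..δ, ∫ θ in (-(Real.arccos (z / r)))..(Real.arccos (z / r)), wc * r)
      = wc * (δ ^ 2 * Real.arccos (z / δ) - z * √(δ ^ 2 - z ^ 2)) := by
  have hne : ∀ r ∈ Set.Icc z δ, r ≠ 0 := fun r hr => (hz.trans_le hr.1).ne'
  have hdiv : ContinuousOn (fun r : ℝ => Real.arccos (z / r)) (Set.Icc z δ) :=
    Real.continuous_arccos.comp_continuousOn (continuousOn_const.div continuousOn_id hne)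
  have h1 : ∀ r : ℝ, (∫ θ in (-(Real.arccos (z / r)))..(Real.arccos (z / r)), wc * r)
      = wc * (2 * r * Real.arccos (z / r)) := by
    intro r
    rw [intervalIntegral.integral_const, smul_eq_mul]
    ring
  simp_rw [h1]
  rw [intervalIntegral.integral_const_mul]
  congr 1
  have key := intervalIntegral.integral_eq_sub_of_hasDerivAt_of_le hzδ
    (f := fun r => r ^ 2 * Real.arccos (z / r) - z * √(r ^ 2 - z ^ 2))
    (f' := fun r => 2 * r * Real.arccos (z / r)) ?_ ?_ ?_
  · rw [key]
    simp [div_self hz.ne']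
  · refine ContinuousOn.sub (ContinuousOn.mul (by fun_prop) hdiv) (by fun_prop)
  · intro r hr
    have hr0 : 0 < r := hz.trans hr.1
    have hlt : z / r < 1 := (div_lt_one hr0).2 hr.1
    have hpos : 0 < z / r := div_pos hz hr0
    have hs : 0 < r ^ 2 - z ^ 2 := by nlinarith [hr.1]
    have d1 : HasDerivAt (fun r : ℝ => z / r) (-z / r ^ 2) r := by
      simpa using (hasDerivAt_const r z).fun_div (hasDerivAt_id r) hr0.ne'
    have d2 := (Real.hasDerivAt_arccos (x := z / r) (by linarith) hlt.ne).comp r d1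
    have d3 : HasDerivAt (fun r : ℝ => r ^ 2) (2 * r) r := by
      simpa using hasDerivAt_pow 2 r
    have d4 := ((d3.sub_const (z ^ 2)).sqrt hs.ne').const_mul z
    have hsq : √(1 - (z / r) ^ 2) = √(r ^ 2 - z ^ 2) / r := by
      rw [show 1 - (z / r) ^ 2 = (r ^ 2 - z ^ 2) / r ^ 2 by field_simp,
        Real.sqrt_div hs.le, Real.sqrt_sq hr0.le]
    have hs' := (Real.sqrt_pos.2 hs).ne'
    refine ((d3.mul d2).sub d4).congr_deriv ?_
    simp only [Function.comp, hsq]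
    field_simp
    ring
  · apply ContinuousOn.intervalIntegrable
    rw [Set.uIcc_of_le hzδ]
    exact ContinuousOn.mul (by fun_prop) hdiv

lemma outer_aux (δ : ℝ) (hδ : 0 < δ) :
    (∫ z in (0:ℝ)..δ, (δ ^ 2 * Real.arccos (z / δ) - z * √(δ ^ 2 - z ^ 2)))
      = 2 * δ ^ 3 / 3 := by
  have hc : Continuous (fun z : ℝ => Real.arccos (z / δ)) :=
    Real.continuous_arccos.comp (continuous_id.div_const δ)
  have key := intervalIntegral.integral_eq_sub_of_hasDerivAt_of_le hδ.le
    (f := fun z => δ ^ 2 * (z * Real.arccos (z / δ) - √(δ ^ 2 - z ^ 2))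
      + √(δ ^ 2 - z ^ 2) ^ 3 / 3)
    (f' := fun z => δ ^ 2 * Real.arccos (z / δ) - z * √(δ ^ 2 - z ^ 2)) ?_ ?_ ?_
  · rw [key]
    simp [div_self hδ.ne', Real.sqrt_sq hδ.le]
    ring
  · exact Continuous.continuousOn (by fun_prop)
  · intro z hz
    have hlt : z / δ < 1 := (div_lt_one hδ).2 hz.2
    have hpos : 0 < z / δ := div_pos hz.1 hδ
    have hs : 0 < δ ^ 2 - z ^ 2 := by nlinarith [hz.1, hz.2]
    have d1 : HasDerivAt (fun z : ℝ => z / δ) (1 / δ) z := (hasDerivAt_id z).div_const δ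
    have d2 := (Real.hasDerivAt_arccos (x := z / δ) (by linarith) hlt.ne).comp z d1
    have d3 : HasDerivAt (fun r : ℝ => r ^ 2) (2 * z) z := by
      simpa using hasDerivAt_pow 2 z
    have d4 := (d3.const_sub (δ ^ 2)).sqrt hs.ne'
    have hsq : √(1 - (z / δ) ^ 2) = √(δ ^ 2 - z ^ 2) / δ := by
      rw [show 1 - (z / δ) ^ 2 = (δ ^ 2 - z ^ 2) / δ ^ 2 by field_simp,
        Real.sqrt_div hs.le, Real.sqrt_sq hδ.le]
    have hs' := (Real.sqrt_pos.2 hs).ne'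
    refine (((((hasDerivAt_id z).mul d2).sub d4).const_mul (δ ^ 2)).add
      ((d4.pow 3).div_const 3)).congr_deriv ?_
    simp only [Function.comp, hsq, id]
    field_simp
    ring
  · exact Continuous.intervalIntegrable (by fun_prop) _ _

/-- 2D energy release rate under the critical energy density criterion: the
iterated integral `h·∫₀^δ ∫_z^δ ∫_{-arccos(z/r)}^{arccos(z/r)} w_c·r dθ dr dz`
equals `2·h·w_c·δ³/3`; consequently, if this equals `G₀ > 0`, then
`w_c = 3·G₀/(2·h·δ³)`. -/
theorem energy_release_rate_critical_energy_density_2D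
    (δ h wc : ℝ) (hδ : 0 < δ) (hh : 0 < h) (hwc : 0 < wc) :
    h * (∫ z in (0:ℝ)..δ, ∫ r in z..δ,
        ∫ θ in (-(Real.arccos (z / r)))..(Real.arccos (z / r)), wc * r)
      = 2 * h * wc * δ ^ 3 / 3 ∧
    ∀ G₀ : ℝ, 0 < G₀ →
      h * (∫ z in (0:ℝ)..δ, ∫ r in z..δ,
          ∫ θ in (-(Real.arccos (z / r)))..(Real.arccos (z / r)), wc * r) = G₀ →
      wc = 3 * G₀ / (2 * h * δ ^ 3) := by
  have main : (∫ z in (0:ℝ)..δ, ∫ r in z..δ,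
        ∫ θ in (-(Real.arccos (z / r)))..(Real.arccos (z / r)), wc * r)
      = wc * (2 * δ ^ 3 / 3) := by
    rw [← outer_aux δ hδ, ← intervalIntegral.integral_const_mul]
    apply intervalIntegral.integral_congr_ae
    refine Filter.Eventually.of_forall fun z hz => ?_
    rw [Set.uIoc_of_le hδ.le] at hz
    exact inner_aux δ wc z hz.1 hz.2
  rw [main]
  refine ⟨by ring, fun G₀ _ hG => ?_⟩
  rw [← hG]
  field_simp
end

section
/- (Nonequivalence of bond-failure criteria for 3D problems.) Let δ > 0, G₀ > 0, K > 0, and let ω : ℝ → ℝ satisfy ω(r) > 0 for r ∈ (0, δ], with I₃ := ∫₀^δ ω(r)·r³ dr and I₄ := ∫₀^δ ω(r)·r⁴ dr finite and positive. Define s₀² = (4·G₀/(9K))·(I₃/I₄) and s_c²(ρ) = (16·G₀/(9·K·δ⁴·ω(ρ)·ρ))·I₃. Then s_c²(ρ) = s₀² for all ρ ∈ (0, δ] if and only if there exists a constant β > 0 such that ω(ρ) = β/ρ for all ρ ∈ (0, δ]. Moreover, in that case, s₀² = s_c²(ρ) = 16·G₀/(27·K·δ) for all ρ ∈ (0, δ].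 -/
open Real MeasureTheory

/-- Nonequivalence of bond-failure criteria for 3D problems: `s_c²(ρ) = s₀²` for
all `ρ ∈ (0, δ]` iff there is `β > 0` with `ω(ρ) = β/ρ` on `(0, δ]`; and in that
case `s₀² = s_c²(ρ) = 16·G₀/(27·K·δ)`. -/
theorem nonequivalence_bond_failure_criteria_3D
    (δ G₀ K : ℝ) (hδ : 0 < δ) (hG₀ : 0 < G₀) (hK : 0 < K)
    (ω : ℝ → ℝ) (hω : ∀ r ∈ Set.Ioc (0:ℝ) δ, 0 < ω r)
    (I₃ I₄ : ℝ)
    (hI₃ : I₃ = ∫ r in (0:ℝ)..δ, ω r * r ^ 3) (hI₃pos : 0 < I₃)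
    (hI₄ : I₄ = ∫ r in (0:ℝ)..δ, ω r * r ^ 4) (hI₄pos : 0 < I₄)
    (s0sq : ℝ) (hs0sq : s0sq = (4 * G₀ / (9 * K)) * (I₃ / I₄))
    (scsq : ℝ → ℝ)
    (hscsq : ∀ ρ ∈ Set.Ioc (0:ℝ) δ,
      scsq ρ = (16 * G₀ / (9 * K * δ ^ 4 * ω ρ * ρ)) * I₃) :
    ((∀ ρ ∈ Set.Ioc (0:ℝ) δ, scsq ρ = s0sq) ↔
      ∃ β : ℝ, 0 < β ∧ ∀ ρ ∈ Set.Ioc (0:ℝ) δ, ω ρ = β / ρ) ∧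
    ((∃ β : ℝ, 0 < β ∧ ∀ ρ ∈ Set.Ioc (0:ℝ) δ, ω ρ = β / ρ) →
      s0sq = 16 * G₀ / (27 * K * δ) ∧
      ∀ ρ ∈ Set.Ioc (0:ℝ) δ, scsq ρ = 16 * G₀ / (27 * K * δ)) := by
  have key : (∃ β : ℝ, 0 < β ∧ ∀ ρ ∈ Set.Ioc (0:ℝ) δ, ω ρ = β / ρ) →
      s0sq = 16 * G₀ / (27 * K * δ) ∧
      ∀ ρ ∈ Set.Ioc (0:ℝ) δ, scsq ρ = 16 * G₀ / (27 * K * δ) := by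
    rintro ⟨β, hβ, h⟩
    have e3 : I₃ = β * (δ ^ 3 / 3) := by
      have : ∫ r in (0:ℝ)..δ, ω r * r ^ 3 = ∫ r in (0:ℝ)..δ, β * r ^ 2 := by
        apply intervalIntegral.integral_congr_ae
        refine Filter.Eventually.of_forall fun r hr => ?_
        rw [Set.uIoc_of_le hδ.le] at hr
        have hr0 : r ≠ 0 := hr.1.ne'
        rw [h r hr]
        field_simp
      rw [hI₃, this, intervalIntegral.integral_const_mul, integral_pow]
      norm_num
    have e4 : I₄ = β * (δ ^ 4 / 4) := by
      have : ∫ r in (0:ℝ)..δ, ω r * r ^ 4 = ∫ r in (0:ℝ)..δ, β * r ^ 3 := by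
        apply intervalIntegral.integral_congr_ae
        refine Filter.Eventually.of_forall fun r hr => ?_
        rw [Set.uIoc_of_le hδ.le] at hr
        have hr0 : r ≠ 0 := hr.1.ne'
        rw [h r hr]
        field_simp
      rw [hI₄, this, intervalIntegral.integral_const_mul, integral_pow]
      norm_num
    refine ⟨?_, fun ρ hρ => ?_⟩
    · rw [hs0sq, e3, e4]
      field_simp
      norm_num
    · have hr0 : ρ ≠ 0 := hρ.1.ne'
      rw [hscsq ρ hρ, h ρ hρ, e3]
      field_simp
      norm_num
  refine ⟨⟨fun h => ⟨4 * I₄ / δ ^ 4, by positivity, fun ρ hρ => ?_⟩, fun h ρ hρ => ?_⟩, key⟩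
  · have h1 := h ρ hρ
    have hr0 : 0 < ρ := hρ.1
    have hw := hω ρ hρ
    rw [hscsq ρ hρ, hs0sq] at h1
    field_simp at h1 ⊢
    linarith
  · rw [(key h).2 ρ hρ, (key h).1]
end

section
/- (Bond-breaking behavior for 3D problems, case α < 1.) Let δ > 0, G₀ > 0, K > 0, and α < 1. For the influence function ω(r) = r^{-α}, with s₀² = 4·G₀·(5−α)/(9·K·(4−α)·δ) and s_c²(ρ) = (4/(5−α))·(δ/ρ)^{1−α}·s₀², the following hold: (i) for every ρ with 0 < ρ < (4/(5−α))^{1/(1−α)}·δ, one has s₀² < s_c²(ρ), so a bond of length ρ at stretch squared s₀² breaks under the critical stretch criterion but not under the critical energy density criterion; (ii) for every ρ with (4/(5−α))^{1/(1−α)}·δ < ρ ≤ δ, one has s_c²(ρ) < s₀², so a bond of length ρ at stretch squared s_c²(ρ) breaks under the critical energy density criterion but not under the critical stretch criterion. -/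
open Real

/-- Bond-breaking behavior for 3D problems, case `α < 1`: with
`s_c²(ρ) = (4/(5−α))·(δ/ρ)^{1−α}·s₀²`, (i) for `0 < ρ < (4/(5−α))^{1/(1−α)}·δ`,
`s₀² < s_c²(ρ)` (a bond at stretch squared `s₀²` breaks under the critical
stretch criterion but not under the critical energy density criterion); and
(ii) for `(4/(5−α))^{1/(1−α)}·δ < ρ ≤ δ`, `s_c²(ρ) < s₀²` (a bond at stretch
squared `s_c²(ρ)` breaks under the critical energy density criterion but not
under the critical stretch criterion). -/
theorem bond_breaking_behavior_3D_alpha_lt_one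
    (δ G₀ K α : ℝ) (hδ : 0 < δ) (hG₀ : 0 < G₀) (hK : 0 < K) (hα : α < 1)
    (s0sq : ℝ) (hs0sq : s0sq = 4 * G₀ * (5 - α) / (9 * K * (4 - α) * δ))
    (scsq : ℝ → ℝ)
    (hscsq : ∀ ρ ∈ Set.Ioc (0:ℝ) δ,
      scsq ρ = (4 / (5 - α)) * (δ / ρ) ^ ((1:ℝ) - α) * s0sq) :
    (∀ ρ : ℝ, 0 < ρ → ρ < (4 / (5 - α)) ^ ((1:ℝ) / (1 - α)) * δ →
      s0sq < scsq ρ) ∧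
    (∀ ρ : ℝ, (4 / (5 - α)) ^ ((1:ℝ) / (1 - α)) * δ < ρ → ρ ≤ δ →
      scsq ρ < s0sq) := by
  have ha : 0 < 1 - α := by linarith
  have hc : 0 < 4 / (5 - α) := div_pos (by norm_num) (by linarith)
  have hc1 : 4 / (5 - α) < 1 := by
    rw [div_lt_one (by linarith)]
    linarith
  have hs : 0 < s0sq := by
    rw [hs0sq]
    have h5 : 0 < 5 - α := by linarith
    have h4 : 0 < 4 - α := by linarith
    positivity
  set t := (4 / (5 - α)) ^ ((1:ℝ) / (1 - α)) with ht
  have ht0 : 0 < t := Real.rpow_pos_of_pos hc _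
  have ht1 : t < 1 := Real.rpow_lt_one hc.le hc1 (by positivity)
  have htc : t ^ (1 - α) = 4 / (5 - α) := by
    rw [ht, ← Real.rpow_mul hc.le, one_div_mul_cancel ha.ne', Real.rpow_one]
  have key : ∀ ρ, 0 < ρ → ρ ≤ δ → scsq ρ = (t * δ / ρ) ^ (1 - α) * s0sq := by
    intro ρ h0 h1
    rw [hscsq ρ ⟨h0, h1⟩, mul_div_assoc, Real.mul_rpow ht0.le (by positivity), htc]
  constructor
  · intro ρ h0 h1
    have h2 : ρ ≤ δ := by nlinarith
    rw [key ρ h0 h2]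
    have h3 : 1 < t * δ / ρ := by rwa [one_lt_div h0]
    have h4 := Real.one_lt_rpow h3 ha
    nlinarith
  · intro ρ h1 h2
    have h0 : 0 < ρ := lt_trans (by positivity) h1
    rw [key ρ h0 h2]
    have h3 : t * δ / ρ < 1 := by rwa [div_lt_one h0]
    have h4 := Real.rpow_lt_one (by positivity) h3 ha
    nlinarith
end

section
/- (Bond-breaking behavior for 3D problems, case 1 < α < 4.) Let δ > 0, G₀ > 0, K > 0, and 1 < α < 4. For the influence function ω(r) = r^{-α}, with s₀² = 4·G₀·(5−α)/(9·K·(4−α)·δ) and s_c²(ρ) = (4/(5−α))·(δ/ρ)^{1−α}·s₀², the following hold: (i) for every ρ with ((5−α)/4)^{1/(α−1)}·δ < ρ ≤ δ, one has s₀² < s_c²(ρ), so a bond of length ρ at stretch squared s₀² breaks under the critical stretch criterion but not under the critical energy density criterion; (ii) for every ρ with 0 < ρ < ((5−α)/4)^{1/(α−1)}·δ, one has s_c²(ρ) < s₀², so a bond of length ρ at stretch squared s_c²(ρ) breaks under the critical energy density criterion but not under the critical stretch criterion. -/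
open Real

/-- Bond-breaking behavior for 3D problems, case `1 < α < 4`: with
`s_c²(ρ) = (4/(5−α))·(δ/ρ)^{1−α}·s₀²`, (i) for `((5−α)/4)^{1/(α−1)}·δ < ρ ≤ δ`,
`s₀² < s_c²(ρ)` (a bond at stretch squared `s₀²` breaks under the critical
stretch criterion but not under the critical energy density criterion); and
(ii) for `0 < ρ < ((5−α)/4)^{1/(α−1)}·δ`, `s_c²(ρ) < s₀²` (a bond at stretch
squared `s_c²(ρ)` breaks under the critical energy density criterion but not
under the critical stretch criterion). -/
theorem bond_breaking_behavior_3D_one_lt_alpha_lt_four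
    (δ G₀ K α : ℝ) (hδ : 0 < δ) (hG₀ : 0 < G₀) (hK : 0 < K)
    (hα1 : 1 < α) (hα4 : α < 4)
    (s0sq : ℝ) (hs0sq : s0sq = 4 * G₀ * (5 - α) / (9 * K * (4 - α) * δ))
    (scsq : ℝ → ℝ)
    (hscsq : ∀ ρ ∈ Set.Ioc (0:ℝ) δ,
      scsq ρ = (4 / (5 - α)) * (δ / ρ) ^ ((1:ℝ) - α) * s0sq) :
    (∀ ρ : ℝ, ((5 - α) / 4) ^ ((1:ℝ) / (α - 1)) * δ < ρ → ρ ≤ δ →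
      s0sq < scsq ρ) ∧
    (∀ ρ : ℝ, 0 < ρ → ρ < ((5 - α) / 4) ^ ((1:ℝ) / (α - 1)) * δ →
      scsq ρ < s0sq) := by
  have h5 : 0 < (5 - α) / 4 := by linarith
  have h5' : 0 < 5 - α := by linarith
  have h4 : 0 < 4 - α := by linarith
  have ha : 0 < α - 1 := by linarith
  have hs : 0 < s0sq := by rw [hs0sq]; positivity
  have hc : 0 < ((5 - α) / 4) ^ ((1:ℝ) / (α - 1)) := Real.rpow_pos_of_pos h5 _
  have hcp : (((5 - α) / 4) ^ ((1:ℝ) / (α - 1))) ^ (α - 1) = (5 - α) / 4 := by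
    rw [← Real.rpow_mul h5.le, one_div_mul_cancel ha.ne', Real.rpow_one]
  have hc1 : ((5 - α) / 4) ^ ((1:ℝ) / (α - 1)) ≤ 1 :=
    Real.rpow_le_one h5.le (by linarith) (by positivity)
  have hflip : ∀ ρ : ℝ, 0 < ρ → (δ / ρ) ^ ((1:ℝ) - α) = (ρ / δ) ^ (α - 1) := by
    intro ρ hρ
    rw [← inv_div ρ δ, Real.inv_rpow (by positivity), ← Real.rpow_neg (by positivity), neg_sub]
  have hone : (4 / (5 - α)) * ((5 - α) / 4) = 1 := by field_simp
  have hq : 0 < 4 / (5 - α) := by positivity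
  constructor
  · intro ρ h1 h2
    have hρ : 0 < ρ := lt_trans (by positivity) h1
    rw [hscsq ρ ⟨hρ, h2⟩, hflip ρ hρ]
    have h := Real.rpow_lt_rpow hc.le ((lt_div_iff₀ hδ).2 h1) ha
    rw [hcp] at h
    have h' := mul_lt_mul_of_pos_left h hq
    rw [hone] at h'
    exact lt_mul_of_one_lt_left hs h'
  · intro ρ hρ h1
    have h2 : ρ ≤ δ := h1.le.trans (mul_le_of_le_one_left hδ.le hc1)
    rw [hscsq ρ ⟨hρ, h2⟩, hflip ρ hρ]
    have h := Real.rpow_lt_rpow (by positivity) ((div_lt_iff₀ hδ).2 h1) ha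
    rw [hcp] at h
    have h' := mul_lt_mul_of_pos_left h hq
    rw [hone] at h'
    exact mul_lt_of_lt_one_left hs h'
end

section
/- (Nonequivalence of bond-failure criteria for 2D problems.) Let δ > 0, G₀ > 0, h > 0, c > 0, and let ω : ℝ → ℝ satisfy ω(r) > 0 for r ∈ (0, δ], with I₃ := ∫₀^δ ω(r)·r³ dr finite and positive. Define s₀² = G₀/(h·c·I₃) and s_c²(ρ) = 3·G₀/(h·c·δ³·ω(ρ)·ρ). Then s_c²(ρ) = s₀² for all ρ ∈ (0, δ] if and only if there exists a constant β > 0 such that ω(ρ) = β/ρ for all ρ ∈ (0, δ]. Moreover, in that case, if additionally c = 16E/(5πh·∫₀^δ ω(r)r² dr) (plane strain) then s₀² = s_c²(ρ) = 15π·G₀/(32·E·δ), while if c = 3E/(πh·∫₀^δ ω(r)r² dr) (plane stress) then s₀² = s_c²(ρ) = π·G₀/(2·E·δ). -/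
open Real MeasureTheory

/-- Nonequivalence of bond-failure criteria for 2D problems: `s_c²(ρ) = s₀²` for
all `ρ ∈ (0, δ]` iff there is `β > 0` with `ω(ρ) = β/ρ` on `(0, δ]`; and in that
case, for the plane strain micromodulus `c = 16E/(5πh·I₂)` one has
`s₀² = s_c²(ρ) = 15π·G₀/(32·E·δ)`, while for the plane stress micromodulus
`c = 3E/(πh·I₂)` one has `s₀² = s_c²(ρ) = π·G₀/(2·E·δ)`. -/
theorem nonequivalence_bond_failure_criteria_2D
    (δ G₀ h c E : ℝ) (hδ : 0 < δ) (hG₀ : 0 < G₀) (hh : 0 < h) (hc : 0 < c)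
    (ω : ℝ → ℝ) (hω : ∀ r ∈ Set.Ioc (0:ℝ) δ, 0 < ω r)
    (I₂ I₃ : ℝ)
    (hI₂ : I₂ = ∫ r in (0:ℝ)..δ, ω r * r ^ 2) (hI₂pos : 0 < I₂)
    (hI₃ : I₃ = ∫ r in (0:ℝ)..δ, ω r * r ^ 3) (hI₃pos : 0 < I₃)
    (s0sq : ℝ) (hs0sq : s0sq = G₀ / (h * c * I₃))
    (scsq : ℝ → ℝ)
    (hscsq : ∀ ρ ∈ Set.Ioc (0:ℝ) δ,
      scsq ρ = 3 * G₀ / (h * c * δ ^ 3 * ω ρ * ρ)) :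
    ((∀ ρ ∈ Set.Ioc (0:ℝ) δ, scsq ρ = s0sq) ↔
      ∃ β : ℝ, 0 < β ∧ ∀ ρ ∈ Set.Ioc (0:ℝ) δ, ω ρ = β / ρ) ∧
    ((∃ β : ℝ, 0 < β ∧ ∀ ρ ∈ Set.Ioc (0:ℝ) δ, ω ρ = β / ρ) →
      (c = 16 * E / (5 * π * h * I₂) →
        s0sq = 15 * π * G₀ / (32 * E * δ) ∧
        ∀ ρ ∈ Set.Ioc (0:ℝ) δ, scsq ρ = 15 * π * G₀ / (32 * E * δ)) ∧
      (c = 3 * E / (π * h * I₂) →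
        s0sq = π * G₀ / (2 * E * δ) ∧
        ∀ ρ ∈ Set.Ioc (0:ℝ) δ, scsq ρ = π * G₀ / (2 * E * δ))) := by
  have hI : ∀ β : ℝ, (∀ ρ ∈ Set.Ioc (0:ℝ) δ, ω ρ = β / ρ) →
      I₂ = β * δ ^ 2 / 2 ∧ I₃ = β * δ ^ 3 / 3 := by
    intro β hβ
    constructor
    · have h1 : ∫ r in (0:ℝ)..δ, ω r * r ^ 2 = ∫ r in (0:ℝ)..δ, β * r ^ 1 := by
        apply intervalIntegral.integral_congr_ae
        refine Filter.Eventually.of_forall fun r hr => ?_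
        rw [Set.uIoc_of_le hδ.le] at hr
        have := hr.1.ne'
        rw [hβ r hr]
        field_simp
      rw [hI₂, h1, intervalIntegral.integral_const_mul, integral_pow]
      norm_num
      ring
    · have h1 : ∫ r in (0:ℝ)..δ, ω r * r ^ 3 = ∫ r in (0:ℝ)..δ, β * r ^ 2 := by
        apply intervalIntegral.integral_congr_ae
        refine Filter.Eventually.of_forall fun r hr => ?_
        rw [Set.uIoc_of_le hδ.le] at hr
        have := hr.1.ne'
        rw [hβ r hr]
        field_simp
      rw [hI₃, h1, intervalIntegral.integral_const_mul, integral_pow]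
      norm_num
      ring
  have hS : ∀ β : ℝ, 0 < β → (∀ ρ ∈ Set.Ioc (0:ℝ) δ, ω ρ = β / ρ) →
      ∀ ρ ∈ Set.Ioc (0:ℝ) δ, scsq ρ = s0sq := by
    intro β hβ0 hβ ρ hρ
    have := hρ.1.ne'
    rw [hscsq ρ hρ, hs0sq, (hI β hβ).2, hβ ρ hρ]
    field_simp
  refine ⟨⟨fun H => ⟨3 * I₃ / δ ^ 3, by positivity, fun ρ hρ => ?_⟩, ?_⟩, ?_⟩
  · have h1 := H ρ hρ
    have h2 := hρ.1
    have h3 := hω ρ hρ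
    rw [hscsq ρ hρ, hs0sq, div_eq_div_iff (by positivity) (by positivity)] at h1
    rw [div_div, eq_div_iff (by positivity)]
    have h4 : (G₀ * h * c) * (ω ρ * (δ ^ 3 * ρ)) = (G₀ * h * c) * (3 * I₃) := by
      linarith
    exact mul_left_cancel₀ (by positivity) h4
  · rintro ⟨β, hβ0, hβ⟩
    exact hS β hβ0 hβ
  · rintro ⟨β, hβ0, hβ⟩
    obtain ⟨e2, e3⟩ := hI β hβ
    have hπ := Real.pi_pos
    constructor
    · intro hcE
      have hE : E ≠ 0 := by
        rintro rfl
        simp at hcE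
        exact hc.ne' hcE
      have h0 : s0sq = 15 * π * G₀ / (32 * E * δ) := by
        rw [hs0sq, hcE, e2, e3]
        field_simp
        try norm_num
      exact ⟨h0, fun ρ hρ => (hS β hβ0 hβ ρ hρ).trans h0⟩
    · intro hcE
      have hE : E ≠ 0 := by
        rintro rfl
        simp at hcE
        exact hc.ne' hcE
      have h0 : s0sq = π * G₀ / (2 * E * δ) := by
        rw [hs0sq, hcE, e2, e3]
        field_simp
        try norm_num
      exact ⟨h0, fun ρ hρ => (hS β hβ0 hβ ρ hρ).trans h0⟩
end

section
/- (Bond-breaking behavior for 2D problems, case 1 < α < 3.) Let δ > 0, s₀ > 0, and 1 < α < 3, and define s_c²(ρ) = (3/(4−α))·(δ/ρ)^{1−α}·s₀² for ρ ∈ (0, δ]. Then: (i) for every ρ with ((4−α)/3)^{1/(α−1)}·δ < ρ ≤ δ, one has s₀² < s_c²(ρ), so a bond of length ρ at stretch squared s₀² breaks under the critical stretch criterion but not under the critical energy density criterion; (ii) for every ρ with 0 < ρ < ((4−α)/3)^{1/(α−1)}·δ, one has s_c²(ρ) < s₀², so a bond of length ρ at stretch squared s_c²(ρ) breaks under the critical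 energy density criterion but not under the critical stretch criterion. -/
open Real

/-- Bond-breaking behavior for 2D problems, case `1 < α < 3`: with
`s_c²(ρ) = (3/(4−α))·(δ/ρ)^{1−α}·s₀²`, (i) for `((4−α)/3)^{1/(α−1)}·δ < ρ ≤ δ`,
`s₀² < s_c²(ρ)` (a bond at stretch squared `s₀²` breaks under the critical
stretch criterion but not under the critical energy density criterion); and
(ii) for `0 < ρ < ((4−α)/3)^{1/(α−1)}·δ`, `s_c²(ρ) < s₀²` (a bond at stretch
squared `s_c²(ρ)` breaks under the critical energy density criterion but not
under the critical stretch criterion). -/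
theorem bond_breaking_behavior_2D_one_lt_alpha_lt_three
    (δ s₀ α : ℝ) (hδ : 0 < δ) (hs₀ : 0 < s₀) (hα1 : 1 < α) (hα3 : α < 3)
    (scsq : ℝ → ℝ)
    (hscsq : ∀ ρ ∈ Set.Ioc (0:ℝ) δ,
      scsq ρ = (3 / (4 - α)) * (δ / ρ) ^ ((1:ℝ) - α) * s₀ ^ 2) :
    (∀ ρ : ℝ, ((4 - α) / 3) ^ ((1:ℝ) / (α - 1)) * δ < ρ → ρ ≤ δ →
      s₀ ^ 2 < scsq ρ) ∧
    (∀ ρ : ℝ, 0 < ρ → ρ < ((4 - α) / 3) ^ ((1:ℝ) / (α - 1)) * δ →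
      scsq ρ < s₀ ^ 2) := by
  have hb : 0 < (4 - α) / 3 := by linarith
  have hb1 : (4 - α) / 3 < 1 := by linarith
  have ha : 0 < α - 1 := by linarith
  have h4 : 0 < 4 - α := by linarith
  have hs : 0 < s₀ ^ 2 := by positivity
  set c := ((4 - α) / 3) ^ ((1:ℝ) / (α - 1)) with hc
  have hc0 : 0 < c := Real.rpow_pos_of_pos hb _
  have hc1 : c < 1 := Real.rpow_lt_one hb.le hb1 (by positivity)
  have hcp : c ^ (α - 1) = (4 - α) / 3 := by
    rw [hc, ← Real.rpow_mul hb.le, one_div_mul_cancel ha.ne', Real.rpow_one]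
  have key : ∀ ρ : ℝ, 0 < ρ → (δ / ρ) ^ ((1:ℝ) - α) = (ρ / δ) ^ (α - 1) := by
    intro ρ hρ
    rw [← inv_div ρ δ, Real.inv_rpow (by positivity), ← Real.rpow_neg (by positivity), neg_sub]
  have hone : 3 / (4 - α) * ((4 - α) / 3) = 1 := by field_simp
  have h3 : 0 < 3 / (4 - α) := by positivity
  constructor
  · intro ρ h1 h2
    have hρ : 0 < ρ := lt_trans (by positivity) h1
    rw [hscsq ρ ⟨hρ, h2⟩, key ρ hρ]
    have h := Real.rpow_lt_rpow hc0.le ((lt_div_iff₀ hδ).2 h1) ha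
    rw [hcp] at h
    have h' := mul_lt_mul_of_pos_left h h3
    rw [hone] at h'
    exact lt_mul_of_one_lt_left hs h'
  · intro ρ hρ h1
    have h2 : ρ ≤ δ := by nlinarith
    rw [hscsq ρ ⟨hρ, h2⟩, key ρ hρ]
    have h := Real.rpow_lt_rpow (by positivity) ((div_lt_iff₀ hδ).2 h1) ha
    rw [hcp] at h
    have h' := mul_lt_mul_of_pos_left h h3
    rw [hone] at h'
    exact mul_lt_of_lt_one_left hs h'
end
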